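/- Suppose the articulated-hauler kinematic constraints (E1), (E2), (E3) hold, D = l2·cos(α34) + l1·cos(γ − α34) ≠ 0, γ̇ = 0, Ω1 ≠ 0, and v12 ≠ 0. Then the quotient of the trailer and tractor steady-state turning radii satisfies (v34/Ω2) / (v12/Ω1) = q(α12), where q(a) = (l2·cos(a + γ) + l1·cos(a)) / D. -/

import Mathlib

/-!
By (E1) and (E2) the velocity of the articulation joint, written in the trailer frame, is the
rotation by `γ` of the same velocity written in the tractor frame. Projecting this velocity on the
trailer axis, and, by the inverse rotation, on the tractor axis, gives two expressions linear in
`v12`, `v34` and one angular velocity each. Multiplying them by `l2` and `l1` and subtracting, one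
is left with only the difference `Ω1 - Ω2` of the angular velocities, the steering rate by (E3).
-/

namespace ArticulatedHauler

open Real

lemma eq_cos_mul_add_sin_mul_of_rotation {θ x y x' y' : ℝ}
    (hx' : x' = cos θ * x - sin θ * y) (hy' : y' = sin θ * x + cos θ * y) :
    x = cos θ * x' + sin θ * y' := by
  rw [hx', hy']
  linear_combination -x * sin_sq_add_cos_sq θ

variable {l1 l2 γ v12 α12 v34 α34 Ω1 Ω2 : ℝ}

lemma trailer_longitudinal_velocity
    (hE1 : v34 * cos α34 = cos γ * (v12 * cos α12) - sin γ * (v12 * sin α12 - l1 * Ω1)) :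
    v34 * cos α34 = v12 * cos (α12 + γ) + l1 * Ω1 * sin γ := by
  rw [hE1, cos_add]
  ring

lemma tractor_longitudinal_velocity
    (hE1 : v34 * cos α34 = cos γ * (v12 * cos α12) - sin γ * (v12 * sin α12 - l1 * Ω1))
    (hE2 : v34 * sin α34 + l2 * Ω2 =
      sin γ * (v12 * cos α12) + cos γ * (v12 * sin α12 - l1 * Ω1)) :
    v12 * cos α12 = v34 * cos (γ - α34) + l2 * Ω2 * sin γ := by
  rw [eq_cos_mul_add_sin_mul_of_rotation hE1 hE2, cos_sub]
  ring

lemma trailer_speed_mul_eq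
    (hE1 : v34 * cos α34 = cos γ * (v12 * cos α12) - sin γ * (v12 * sin α12 - l1 * Ω1))
    (hE2 : v34 * sin α34 + l2 * Ω2 =
      sin γ * (v12 * cos α12) + cos γ * (v12 * sin α12 - l1 * Ω1)) :
    v34 * (l2 * cos α34 + l1 * cos (γ - α34)) =
      v12 * (l2 * cos (α12 + γ) + l1 * cos α12) + l1 * l2 * (Ω1 - Ω2) * sin γ := by
  linear_combination l2 * trailer_longitudinal_velocity hE1 -
    l1 * tractor_longitudinal_velocity hE1 hE2

lemma speed_quotient
    (hE1 : v34 * cos α34 = cos γ * (v12 * cos α12) - sin γ * (v12 * sin α12 - l1 * Ω1))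
    (hE2 : v34 * sin α34 + l2 * Ω2 =
      sin γ * (v12 * cos α12) + cos γ * (v12 * sin α12 - l1 * Ω1))
    (hD : l2 * cos α34 + l1 * cos (γ - α34) ≠ 0) (hv12 : v12 ≠ 0) :
    v34 / v12 =
      (l2 * cos (α12 + γ) + l1 * cos α12) / (l2 * cos α34 + l1 * cos (γ - α34)) +
        l1 * l2 * (Ω1 - Ω2) * sin γ / (v12 * (l2 * cos α34 + l1 * cos (γ - α34))) := by
  rw [← mul_div_mul_right v34 v12 hD, trailer_speed_mul_eq hE1 hE2, add_div,
    mul_div_mul_left _ _ hv12]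

end ArticulatedHauler

theorem turning_radius_quotient_general
    {l1 l2 γ γd v12 α12 v34 α34 Ω1 Ω2 : ℝ}
    (hE1 : v34 * Real.cos α34 =
      Real.cos γ * (v12 * Real.cos α12) -
        Real.sin γ * (v12 * Real.sin α12 - l1 * Ω1))
    (hE2 : v34 * Real.sin α34 + l2 * Ω2 =
      Real.sin γ * (v12 * Real.cos α12) +
        Real.cos γ * (v12 * Real.sin α12 - l1 * Ω1))
    (hE3 : Ω2 = Ω1 - γd)
    (hD : l2 * Real.cos α34 + l1 * Real.cos (γ - α34) ≠ 0)
    (hΩ1 : Ω1 ≠ 0) (hΩ2 : Ω2 ≠ 0) (hv12 : v12 ≠ 0) :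
    (v34 / Ω2) / (v12 / Ω1) * (1 - γd / Ω1) =
      (l2 * Real.cos (α12 + γ) + l1 * Real.cos α12) /
          (l2 * Real.cos α34 + l1 * Real.cos (γ - α34)) +
        l1 * l2 * γd * Real.sin γ /
          (v12 * (l2 * Real.cos α34 + l1 * Real.cos (γ - α34))) := by
  have angular_quotient : 1 - γd / Ω1 = Ω2 / Ω1 := by rw [hE3, sub_div, div_self hΩ1]
  have steering_rate : γd = Ω1 - Ω2 := by rw [hE3, sub_sub_cancel]
  calc
    (v34 / Ω2) / (v12 / Ω1) * (1 - γd / Ω1) = v34 / v12 := by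
      rw [angular_quotient, div_div_div_comm, div_mul_cancel₀ _ (div_ne_zero hΩ2 hΩ1)]
    _ = _ := by
      rw [steering_rate]
      exact ArticulatedHauler.speed_quotient hE1 hE2 hD hv12

/-- Under (E1), (E2), (E3), with `D ≠ 0`, `γ̇ = 0`, `Ω1 ≠ 0`, and
`v12 ≠ 0`, the quotient of the trailer and tractor steady-state turning radii satisfies
`(v34 / Ω2) / (v12 / Ω1) = q α12`, where `q a = (l2·cos (a + γ) + l1·cos a) / D`. -/
theorem turning_radius_quotient
    (l1 l2 γ γd v12 α12 v34 α34 Ω1 Ω2 : ℝ)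
    (hE1 : v34 * Real.cos α34 =
      Real.cos γ * (v12 * Real.cos α12) -
        Real.sin γ * (v12 * Real.sin α12 - l1 * Ω1))
    (hE2 : v34 * Real.sin α34 + l2 * Ω2 =
      Real.sin γ * (v12 * Real.cos α12) +
        Real.cos γ * (v12 * Real.sin α12 - l1 * Ω1))
    (hE3 : Ω2 = Ω1 - γd)
    (hD : l2 * Real.cos α34 + l1 * Real.cos (γ - α34) ≠ 0)
    (hss : γd = 0) (hΩ1 : Ω1 ≠ 0) (hv12 : v12 ≠ 0) :
    (v34 / Ω2) / (v12 / Ω1) =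
      (fun a : ℝ => (l2 * Real.cos (a + γ) + l1 * Real.cos a) /
        (l2 * Real.cos α34 + l1 * Real.cos (γ - α34))) α12 := by
  have hΩ2 : Ω2 ≠ 0 := by rwa [hE3, hss, sub_zero]
  simpa [hss] using turning_radius_quotient_general hE1 hE2 hE3 hD hΩ1 hΩ2 hv12
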